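/- arXiv:2308.09535 — 2 statements merged into one kernel-verified Lean document; each statement's English description precedes it below -/
import Mathlib

section
/- (Lemma 1(i)) Under the balanced-design assumption, (1 − δ) K_Z ≤ Σ_{i,j} A_ij² ≤ K_Z; in particular there exist constants 0 < c < C depending only on δ such that c < (1/K_Z) Σ_{i,j} A_ij² < C. -/
open Matrix Finset

/-- The residual-maker (annihilator) projection `M_W = I - W (W'W)⁻¹ W'`. -/
noncomputable def annihilator {N KW : ℕ} (W : Matrix (Fin N) (Fin KW) ℝ) :
    Matrix (Fin N) (Fin N) ℝ :=
  1 - W * (Wᵀ * W)⁻¹ * Wᵀ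

/-- The balanced-design assumption for the matrices `W`, `P⊥`, the vector `θ` and
the constant `δ`: `W` has full column rank, `P⊥` is a symmetric idempotent matrix of rank
`K_Z` with `M_W P⊥ = P⊥ M_W = P⊥`, `θ` solves `∑_j (M_W)_ij² θ_j = (P⊥)_ii` with `θ_i ≥ 0`,
`min_i (M_W)_ii > 1/2`, and `(P⊥)_ii/(M_W)_ii² ≤ δ` for all `i`. -/
structure BalancedDesign {N KW : ℕ} (KZ : ℕ) (W : Matrix (Fin N) (Fin KW) ℝ)
    (Pperp : Matrix (Fin N) (Fin N) ℝ) (θ : Fin N → ℝ) (δ : ℝ) : Prop where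
  hWrank : W.rank = KW
  hPsymm : Pperp.IsSymm
  hPidem : Pperp * Pperp = Pperp
  hPrank : Pperp.rank = KZ
  hMP : annihilator W * Pperp = Pperp
  hPM : Pperp * annihilator W = Pperp
  hθ : ∀ i, ∑ j, (annihilator W i j) ^ 2 * θ j = Pperp i i
  hθnn : ∀ i, 0 ≤ θ i
  hMdiag : ∀ i, 1 / 2 < annihilator W i i
  hδ : ∀ i, Pperp i i / (annihilator W i i) ^ 2 ≤ δ

/-- The diagonal-free matrix `A = P⊥ − M_W D_θ M_W`. -/
noncomputable def Amat {N KW : ℕ} (W : Matrix (Fin N) (Fin KW) ℝ)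
    (Pperp : Matrix (Fin N) (Fin N) ℝ) (θ : Fin N → ℝ) : Matrix (Fin N) (Fin N) ℝ :=
  Pperp - annihilator W * Matrix.diagonal θ * annihilator W

theorem aux_isUnit {n : ℕ} (G : Matrix (Fin n) (Fin n) ℝ) (h : G.rank = n) : IsUnit G := by
  rw [← Matrix.linearIndependent_cols_iff_isUnit, linearIndependent_iff_card_eq_finrank_span]
  rw [Matrix.rank_eq_finrank_span_cols] at h
  simp only [Fintype.card_fin]
  exact h.symm

theorem aux_trace {n : ℕ} (P : Matrix (Fin n) (Fin n) ℝ) (h : P * P = P) :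
    P.trace = (P.rank : ℝ) := by
  have hid : IsIdempotentElem (Matrix.toLin' P) := by
    unfold IsIdempotentElem
    rw [Module.End.mul_eq_comp, ← Matrix.toLin'_mul, h]
  have h2 := (LinearMap.IsIdempotentElem.isProj_range _ hid).trace
  rw [Matrix.trace_toLin'_eq] at h2
  rw [h2, Matrix.rank, Matrix.toLin'_apply']

theorem aux_symm {N KW : ℕ} (W : Matrix (Fin N) (Fin KW) ℝ) :
    (annihilator W)ᵀ = annihilator W := by
  simp [annihilator, Matrix.transpose_mul, Matrix.transpose_nonsing_inv, Matrix.mul_assoc]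

theorem aux_idem {N KW : ℕ} (W : Matrix (Fin N) (Fin KW) ℝ) (h : W.rank = KW) :
    annihilator W * annihilator W = annihilator W := by
  have hu : IsUnit (Wᵀ * W) := aux_isUnit _ (by rw [Matrix.rank_transpose_mul_self, h])
  have hd := (Matrix.isUnit_iff_isUnit_det _).1 hu
  have hq : W * (Wᵀ * W)⁻¹ * Wᵀ * (W * (Wᵀ * W)⁻¹ * Wᵀ) = W * (Wᵀ * W)⁻¹ * Wᵀ := by
    calc _ = W * ((Wᵀ * W)⁻¹ * (Wᵀ * W)) * (Wᵀ * W)⁻¹ * Wᵀ := by simp only [Matrix.mul_assoc]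
      _ = _ := by rw [Matrix.nonsing_inv_mul _ hd, Matrix.mul_one]
  unfold annihilator
  rw [sub_mul, mul_sub, mul_sub, hq]
  simp

theorem aux_main {N KW KZ : ℕ} {W : Matrix (Fin N) (Fin KW) ℝ}
    {P : Matrix (Fin N) (Fin N) ℝ} {θ : Fin N → ℝ} {δ : ℝ}
    (h : BalancedDesign KZ W P θ δ) :
    ∑ i, ∑ j, (Amat W P θ i j) ^ 2 = (KZ : ℝ) - ∑ i, P i i * θ i := by
  have hs := aux_symm W
  have hi := aux_idem W h.hWrank
  have hθ := h.hθ
  have hMP := h.hMP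
  have hPM := h.hPM
  have hPs : Pᵀ = P := h.hPsymm
  have hA : (Amat W P θ)ᵀ = Amat W P θ := by
    simp [Amat, Matrix.transpose_mul, hs, hPs, Matrix.mul_assoc]
  have h1 : ∑ i, ∑ j, (Amat W P θ i j) ^ 2 = (Amat W P θ * Amat W P θ).trace := by
    conv_rhs => rw [← hA]
    rw [hA]
    simp only [Matrix.trace, Matrix.diag_apply, Matrix.mul_apply]
    refine Finset.sum_congr rfl fun i _ => Finset.sum_congr rfl fun j _ => ?_
    have : Amat W P θ j i = Amat W P θ i j := congrFun (congrFun hA i) j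
    rw [this, sq]
  rw [h1]
  unfold Amat
  generalize annihilator W = M at *
  have hPD : (P * diagonal θ).trace = ∑ i, P i i * θ i := by
    simp [Matrix.trace, Matrix.mul_diagonal]
  have t1 : (P * (M * diagonal θ * M)).trace = ∑ i, P i i * θ i := by
    rw [← Matrix.mul_assoc, ← Matrix.mul_assoc, hPM, Matrix.trace_mul_comm, ← Matrix.mul_assoc,
      hMP, hPD]
  have t2 : ((M * diagonal θ * M) * (M * diagonal θ * M)).trace = ∑ i, P i i * θ i := by
    have e : (M * diagonal θ * M) * (M * diagonal θ * M) = (M * diagonal θ * M * diagonal θ) * M := by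
      calc _ = M * diagonal θ * (M * M) * diagonal θ * M := by simp only [Matrix.mul_assoc]
        _ = _ := by rw [hi]
    rw [e, Matrix.trace_mul_comm]
    have e2 : M * (M * diagonal θ * M * diagonal θ) = M * diagonal θ * M * diagonal θ := by
      calc _ = (M * M) * diagonal θ * M * diagonal θ := by simp only [Matrix.mul_assoc]
        _ = _ := by rw [hi]
    rw [e2]
    simp only [Matrix.trace, Matrix.diag_apply, Matrix.mul_diagonal]
    refine Finset.sum_congr rfl fun i _ => ?_
    rw [← hθ i, Matrix.mul_apply]
    congr 1
    refine Finset.sum_congr rfl fun j _ => ?_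
    have : M j i = M i j := congrFun (congrFun hs i) j
    rw [Matrix.mul_diagonal, this]
    ring
  rw [sub_mul, mul_sub, mul_sub, Matrix.trace_sub, Matrix.trace_sub, Matrix.trace_sub,
    Matrix.trace_mul_comm (M * diagonal θ * M) P, t1, t2, h.hPidem, aux_trace P h.hPidem, h.hPrank]
  ring

theorem aux_bounds {N KW KZ : ℕ} {W : Matrix (Fin N) (Fin KW) ℝ}
    {P : Matrix (Fin N) (Fin N) ℝ} {θ : Fin N → ℝ} {δ : ℝ}
    (h : BalancedDesign KZ W P θ δ) :
    0 ≤ ∑ i, P i i * θ i ∧ ∑ i, P i i * θ i ≤ δ * (KZ : ℝ) := by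
  have hP : ∀ i, 0 ≤ P i i := fun i => by
    rw [← h.hθ i]
    exact Finset.sum_nonneg fun j _ => mul_nonneg (sq_nonneg _) (h.hθnn j)
  refine ⟨Finset.sum_nonneg fun i _ => mul_nonneg (hP i) (h.hθnn i), ?_⟩
  have hk : (KZ : ℝ) = ∑ i, P i i := by
    rw [← h.hPrank, ← aux_trace P h.hPidem]; rfl
  rw [hk, Finset.mul_sum]
  refine Finset.sum_le_sum fun i _ => ?_
  rw [mul_comm]
  refine mul_le_mul_of_nonneg_right (le_trans ?_ (h.hδ i)) (hP i)
  have hm := h.hMdiag i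
  rw [le_div_iff₀ (by positivity), ← h.hθ i, mul_comm]
  exact Finset.single_le_sum (f := fun j => (annihilator W i j) ^ 2 * θ j)
    (fun j _ => mul_nonneg (sq_nonneg _) (h.hθnn j)) (Finset.mem_univ i)

/-- Lemma 1(i): Under the balanced-design assumption,
`(1 − δ) K_Z ≤ ∑_{i,j} A_ij² ≤ K_Z`; in particular there exist constants `0 < c < C`
depending only on `δ` such that `c < (1/K_Z) ∑_{i,j} A_ij² < C`. -/
theorem lemma1_part_i (δ : ℝ) (hδ : δ < 1) :
    ∃ c C : ℝ, 0 < c ∧ c < C ∧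
      ∀ (N KW KZ : ℕ) (W : Matrix (Fin N) (Fin KW) ℝ)
        (Pperp : Matrix (Fin N) (Fin N) ℝ) (θ : Fin N → ℝ),
        BalancedDesign KZ W Pperp θ δ →
        ((1 - δ) * (KZ : ℝ) ≤ ∑ i, ∑ j, (Amat W Pperp θ i j) ^ 2 ∧
          ∑ i, ∑ j, (Amat W Pperp θ i j) ^ 2 ≤ (KZ : ℝ)) ∧
        (0 < KZ →
          c < (1 / (KZ : ℝ)) * ∑ i, ∑ j, (Amat W Pperp θ i j) ^ 2 ∧
          (1 / (KZ : ℝ)) * ∑ i, ∑ j, (Amat W Pperp θ i j) ^ 2 < C) := by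
  refine ⟨(1 - δ) / 2, 2 + (1 - δ) / 2, by linarith, by linarith, ?_⟩
  intro N KW KZ W P θ h
  obtain ⟨b1, b2⟩ := aux_bounds h
  rw [aux_main h]
  refine ⟨⟨by linarith, by linarith⟩, fun hk => ?_⟩
  have hk' : (0 : ℝ) < KZ := by exact_mod_cast hk
  rw [one_div_mul_eq_div, lt_div_iff₀ hk', div_lt_iff₀ hk']
  constructor <;> nlinarith [mul_pos (sub_pos.2 hδ) hk']
end

section
/- Let M be a symmetric idempotent N×N real matrix with M_ii > 1/2 for every i. Then for every i, Σ_{j≠i} M_ij² = M_ii (1 − M_ii) < M_ii². Consequently the Hadamard square M∘M, the N×N matrix with entries M_ij², is strictly diagonally dominant and hence invertible. -/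
open Matrix Finset

/-- Let `M` be a symmetric idempotent `N × N` real matrix with `M i i > 1/2` for
every `i`. Then for every `i`, `∑_{j ≠ i} M i j ^ 2 = M i i * (1 - M i i) < M i i ^ 2`.
Consequently the Hadamard square `M ∘ M` (entries `M i j ^ 2`) is strictly diagonally dominant
and hence invertible. -/
theorem hadamard_square_of_projection_diag_dominant_invertible
    (N : ℕ) (M : Matrix (Fin N) (Fin N) ℝ)
    (hMsymm : M.IsSymm) (hMidem : M * M = M)
    (hMdiag : ∀ i, 1 / 2 < M i i) :
    (∀ i, ∑ j ∈ Finset.univ.erase i, (M i j) ^ 2 = M i i * (1 - M i i)) ∧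
    (∀ i, M i i * (1 - M i i) < (M i i) ^ 2) ∧
    (∀ i, ∑ j ∈ Finset.univ.erase i, |(M i j) ^ 2| < |(M i i) ^ 2|) ∧
    IsUnit (Matrix.of fun i j => (M i j) ^ 2) := by
  have h1 : ∀ i, ∑ j ∈ Finset.univ.erase i, (M i j) ^ 2 = M i i * (1 - M i i) := by
    intro i
    have h := congrFun (congrFun hMidem i) i
    rw [Matrix.mul_apply] at h
    have h2 : ∑ j, (M i j) ^ 2 = M i i := by
      rw [← h]
      refine Finset.sum_congr rfl fun j _ => ?_
      rw [hMsymm.apply i j, sq]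
    have h3 := Finset.add_sum_erase Finset.univ (fun j => (M i j) ^ 2) (Finset.mem_univ i)
    linarith
  have h2 : ∀ i, M i i * (1 - M i i) < (M i i) ^ 2 := by
    intro i
    nlinarith [hMdiag i]
  have h3 : ∀ i, ∑ j ∈ Finset.univ.erase i, |(M i j) ^ 2| < |(M i i) ^ 2| := by
    intro i
    simp only [abs_sq]
    rw [h1 i]
    exact h2 i
  refine ⟨h1, h2, h3, ?_⟩
  rw [Matrix.isUnit_iff_isUnit_det, isUnit_iff_ne_zero]
  exact det_ne_zero_of_sum_row_lt_diag h3
end
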